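/- For every γ = [[a,b],[c,d]] ∈ SL(2,ℤ) and every τ ∈ ℍ, the matrix-valued function e satisfies the weight-2 equivariance law e(γ·τ) · γ = (cτ+d)² γ · e(τ), where γ is regarded as a matrix in M₂(ℂ); equivalently e(γ·τ) = (cτ+d)² γ e(τ) γ⁻¹. -/

import Mathlib

open Matrix Complex

noncomputable section

abbrev SL2Z := Matrix.SpecialLinearGroup (Fin 2) ℤ

/-- Möbius action of `SL(2,ℤ)` on the upper half plane, as a formula on `ℂ`. -/
def moebius (γ : SL2Z) (τ : ℂ) : ℂ :=
  ((γ 0 0 : ℂ) * τ + (γ 0 1 : ℂ)) / ((γ 1 0 : ℂ) * τ + (γ 1 1 : ℂ))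

/-- `γ ∈ SL(2,ℤ)` regarded as a matrix in `M₂(ℂ)`. -/
def toMatC (γ : SL2Z) : Matrix (Fin 2) (Fin 2) ℂ :=
  (γ : Matrix (Fin 2) (Fin 2) ℤ).map (Int.cast : ℤ → ℂ)

/-- σ₁(n), the sum of the divisors of `n`. -/
def sigma1 (n : ℕ) : ℕ := ∑ d ∈ n.divisors, d

/-- The weight 2 Eisenstein series `E₂(τ) = 1 - 24 ∑_{n ≥ 1} σ₁(n) e^{2πinτ}`. -/
def E2 (τ : ℂ) : ℂ :=
  1 - 24 * ∑' n : ℕ, (sigma1 (n + 1) : ℂ) *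
    Complex.exp (2 * (Real.pi : ℂ) * Complex.I * ((n : ℂ) + 1) * τ)

/-- `π` as a complex number. -/
def piC : ℂ := (Real.pi : ℂ)

/-- The matrix-valued modular form `f(τ)` of weight `-2`. -/
def fM (τ : ℂ) : Matrix (Fin 2) (Fin 2) ℂ := !![τ, -τ ^ 2; 1, -τ]

/-- The matrix-valued modular form `h(τ)` of weight `0`. -/
def hM (τ : ℂ) : Matrix (Fin 2) (Fin 2) ℂ :=
  !![Complex.I * piC * τ / 3 * E2 τ + 1, -(Complex.I * piC * τ ^ 2 / 3) * E2 τ - 2 * τ;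
     Complex.I * piC / 3 * E2 τ, -(Complex.I * piC * τ / 3) * E2 τ - 1]

/-- The matrix-valued modular form `e(τ)` of weight `2`. -/
def eM (τ : ℂ) : Matrix (Fin 2) (Fin 2) ℂ :=
  !![piC ^ 2 * τ / 36 * E2 τ ^ 2 - Complex.I * piC / 6 * E2 τ,
       -(piC ^ 2 * τ ^ 2 / 36) * E2 τ ^ 2 + Complex.I * piC * τ / 3 * E2 τ + 1;
     piC ^ 2 / 36 * E2 τ ^ 2,
       -(piC ^ 2 * τ / 36) * E2 τ ^ 2 + Complex.I * piC / 6 * E2 τ]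

/-- The matrix `Φ₁(τ)`. -/
def Phi1 (τ : ℂ) : Matrix (Fin 2) (Fin 2) ℂ :=
  !![Complex.I * piC * τ / 6 * E2 τ + 1, τ; Complex.I * piC / 6 * E2 τ, 1]

theorem E2_eq_mathlib (z : UpperHalfPlane) : E2 (z : ℂ) = EisensteinSeries.E2 z := by
  rw [EisensteinSeries.E2_eq_tsum_cexp, E2,
    tsum_pnat_eq_tsum_succ (f := fun n : ℕ => (ArithmeticFunction.sigma 1 n : ℂ) *
      (Complex.exp (2 * (Real.pi : ℂ) * Complex.I * (z : ℂ))) ^ n)]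
  congr 2
  refine tsum_congr fun n => ?_
  rw [ArithmeticFunction.sigma_one_apply, sigma1, ← Complex.exp_nat_mul]
  congr 2
  push_cast
  ring

theorem E2_transform (γ : SL2Z) (τ : ℂ) (hτ : 0 < τ.im) :
    ((γ 1 0 : ℂ) * τ + (γ 1 1 : ℂ)) ≠ 0 ∧
    Complex.I * piC / 6 * E2 (moebius γ τ) =
      ((γ 1 0 : ℂ) * τ + (γ 1 1 : ℂ)) ^ 2 * (Complex.I * piC / 6 * E2 τ)
        + (γ 1 0 : ℂ) * ((γ 1 0 : ℂ) * τ + (γ 1 1 : ℂ)) := by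
  set z : UpperHalfPlane := ⟨τ, hτ⟩ with hz
  have hzc : (z : ℂ) = τ := rfl
  have hd : UpperHalfPlane.denom γ z = (γ 1 0 : ℂ) * τ + (γ 1 1 : ℂ) := by
    rw [ModularGroup.denom_apply, hzc]
  have hne : ((γ 1 0 : ℂ) * τ + (γ 1 1 : ℂ)) ≠ 0 := by
    rw [← hd]; exact UpperHalfPlane.denom_ne_zero _ z
  have hm : moebius γ τ = ((γ • z : UpperHalfPlane) : ℂ) := by
    rw [UpperHalfPlane.coe_specialLinearGroup_apply, moebius, hzc]
    simp
  refine ⟨hne, ?_⟩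
  have h := congrFun (EisensteinSeries.E2_slash_action γ) z
  rw [ModularForm.SL_slash_apply, Pi.sub_apply, Pi.smul_apply, EisensteinSeries.D2, hd,
    ← E2_eq_mathlib, ← E2_eq_mathlib, ← hm, hzc, riemannZeta_two, smul_eq_mul] at h
  generalize ((γ 1 0 : ℂ) * τ + (γ 1 1 : ℂ)) = j at *
  have hpi : (Real.pi : ℂ) ≠ 0 := by exact_mod_cast Real.pi_ne_zero
  have h2 : E2 (moebius γ τ) = j ^ 2 * E2 τ - 6 * Complex.I * (γ 1 0 : ℂ) * j / Real.pi := by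
    rw [_root_.zpow_neg, mul_inv_eq_iff_eq_mul₀ (zpow_ne_zero _ hne)] at h
    rw [h, show (j ^ (2 : ℤ)) = j ^ 2 by norm_cast]
    field_simp
  rw [h2, piC]
  field_simp
  ring_nf
  rw [Complex.I_sq]
  ring

/-- the weight 2 equivariance law `e(γ·τ)·γ = (cτ+d)² γ·e(τ)`. -/
theorem eM_weight_two_equivariance (γ : SL2Z) (τ : ℂ) (hτ : 0 < τ.im) :
    eM (moebius γ τ) * toMatC γ =
      ((γ 1 0 : ℂ) * τ + (γ 1 1 : ℂ)) ^ 2 • (toMatC γ * eM τ) := by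
  obtain ⟨hne, hx⟩ := E2_transform γ τ hτ
  have hdet : (γ 0 0 : ℂ) * (γ 1 1 : ℂ) - (γ 0 1 : ℂ) * (γ 1 0 : ℂ) = 1 := by
    have := γ.det_coe
    rw [Matrix.det_fin_two] at this
    exact_mod_cast this
  have hmat : toMatC γ = !![(γ 0 0 : ℂ), (γ 0 1 : ℂ); (γ 1 0 : ℂ), (γ 1 1 : ℂ)] := by
    ext i j; fin_cases i <;> fin_cases j <;> rfl
  have he : ∀ t x : ℂ, x = Complex.I * piC / 6 * E2 t →
      eM t = !![-x * (t * x + 1), (t * x + 1) ^ 2; -x ^ 2, x * (t * x + 1)] := by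
    intro t x h
    subst h
    rw [eM]
    ext i j
    fin_cases i <;> fin_cases j <;> simp <;> ring_nf <;> simp only [Complex.I_sq] <;> ring
  have hj : moebius γ τ * ((γ 1 0 : ℂ) * τ + (γ 1 1 : ℂ)) = (γ 0 0 : ℂ) * τ + (γ 0 1 : ℂ) := by
    rw [moebius, div_mul_cancel₀ _ hne]
  rw [he _ _ hx.symm, he τ _ rfl, hmat]
  generalize Complex.I * piC / 6 * E2 τ = x
  generalize moebius γ τ = t at *
  generalize (γ 0 0 : ℂ) = a at *
  generalize (γ 0 1 : ℂ) = b at *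
  generalize (γ 1 0 : ℂ) = c at *
  generalize (γ 1 1 : ℂ) = d at *
  have hv2 : (c * τ + d) ^ 2 * x + c * (c * τ + d) = (c * τ + d) * (c * (τ * x + 1) + d * x) := by
    ring
  have hv1 : t * ((c * τ + d) * (c * (τ * x + 1) + d * x)) + 1
      = (c * τ + d) * (a * (τ * x + 1) + b * x) := by
    linear_combination (c * (τ * x + 1) + d * x) * hj - hdet
  rw [hv2, hv1]
  ext i k
  fin_cases i <;> fin_cases k <;> simp
  · linear_combination (-(c * τ + d) ^ 2 * x * (a * (τ * x + 1) + b * x)) * hdet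
  · linear_combination ((c * τ + d) ^ 2 * (τ * x + 1) * (a * (τ * x + 1) + b * x)) * hdet
  · linear_combination (-(c * τ + d) ^ 2 * x * (c * (τ * x + 1) + d * x)) * hdet
  · linear_combination ((c * τ + d) ^ 2 * (τ * x + 1) * (c * (τ * x + 1) + d * x)) * hdet

end
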